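/- Let d = 1, μ = ∏_{t=0}^T μ_t, and let c : S → ℝ∪{+∞} be lower semicontinuous and μ-integrable with c ≥ Kψ for some K ∈ ℝ. Then the Monge–Kantorovich problem — minimize ∫_S c dλ over nonnegative λ ∈ M with λ_t = μ_t for all t — and its dual relaxation — minimize ∫_S Σ_{t=0}^T x_t dμ over x ∈ ∏_t L^0(S_t;ℝ) with −Σ_{t=0}^T x_t ≤ c on a product of μ_t-full-measure sets — are both attained, there is no duality gap, and feasible λ and x are optimal if and only if ∫_S (c + Σ_{t=0}^T x_t) dλ = 0. Moreover, every feasible x has x_t ∈ L^1(μ_t), so the relaxed objective equals Σ_{t=0}^T ∫_{S_t} x_t dμ_t. -/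

import Mathlib

/-!
Write `C = c - Kψ ≥ 0`, a lower semicontinuous function. Since `∫ ψ dλ` is determined by the
marginals of `λ`, minimizing `∫ c dλ` amounts to minimizing `∫ C dλ`, and substituting
`x_t = -φ_t - K ψ_t` turns potentials `φ` with `Σ φ_t ≤ C` into dual feasible points.

*Dual attainment* (`exists_dual_minimizer`). Along a minimizing sequence the functions
`Σ x_t + c` are nonnegative and bounded in `L¹(μ)`. The feasible set being convex, near-minimizers
of the strictly convex functional `f ↦ ∫ e^(-f) dμ` over the sets of almost optimal points converge
almost everywhere along a subsequence (`exists_ae_convergent`). Convergence of the sums `Σ x_t`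
passes to each coordinate by freezing the others at a generic point, and the limit is feasible on
a product of full-measure sets; Fatou's lemma shows that it is optimal.

*Transport attainment and absence of a gap* (`exists_coupling_of_dual_bound`). Let `m₀` be the dual
optimal value. Every continuous potential with `Σ φ_t ≤ C` satisfies
`Σ ∫ φ_t dμ_t ≤ D := -m₀ - K ∫ ψ dμ`. Embedding the `S_t` in Hilbert cubes, a positive extension
theorem and the Riesz representation theorem (`exists_measure_of_dual_bound`) produce a coupling
`λ` with `∫ g dλ ≤ D` for all continuous `g ≤ C`, and `C` is an increasing limit of such `g`.
Hence `∫ c dλ ≤ -m₀`, while weak duality gives the reverse inequality.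

*Optimality.* If every `x_t` is integrable, then `∫ (c + Σ x_t) dλ` equals the sum of the transport
and dual objectives; it is nonnegative because inequalities valid on a product of full-measure sets
hold almost everywhere for every coupling. The `x_t` are indeed integrable: each of them has an
integrable lower bound (`exists_integrable_neg_le`), so an upper bound on `Σ x_t` bounds each `x_t`
from above. That upper bound comes from finiteness of the dual objective or, when
`∫ (c + Σ x_t) dλ = 0`, from `Σ x_t = -c ≤ -Kψ` holding `λ`-almost everywhere.
-/

open MeasureTheory Filter Set
open scoped ENNReal

noncomputable section

/-- The positive part of an extended real number, as an extended nonnegative real. -/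
def EReal.posPart' (x : EReal) : ℝ≥0∞ := if x = ⊤ then ⊤ else ENNReal.ofReal x.toReal

/-- Integral of an `EReal`-valued function, with the convention that the value is `⊤`
whenever the positive part fails to be integrable. -/
def eInt {X : Type*} [MeasurableSpace X] (μ : Measure X) (f : X → EReal) : EReal :=
  if (∫⁻ s, (f s).posPart' ∂μ) = ⊤ then ⊤
  else ((∫⁻ s, (f s).posPart' ∂μ : ℝ≥0∞) : EReal) -
    ((∫⁻ s, (-(f s)).posPart' ∂μ : ℝ≥0∞) : EReal)

/-- Integral of a real function against a finite signed measure, via the Jordan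
decomposition. -/
def sInt {X : Type*} [MeasurableSpace X] (m : SignedMeasure X) (f : X → ℝ) : ℝ :=
  ∫ s, f s ∂m.toJordanDecomposition.posPart - ∫ s, f s ∂m.toJordanDecomposition.negPart

/-- Convexity of an extended-real-valued function on a real vector space. -/
def EConvexOn {E : Type*} [AddCommGroup E] [Module ℝ E] (k : E → EReal) : Prop :=
  ∀ x y : E, ∀ a b : ℝ, 0 ≤ a → 0 ≤ b → a + b = 1 →
    k (a • x + b • y) ≤ (a : EReal) * k x + (b : EReal) * k y

/-- Properness of an extended-real-valued function: it is nowhere `−∞` and somewhere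
finite. -/
def EProper {E : Type*} (k : E → EReal) : Prop := (∃ x, k x ≠ ⊤) ∧ ∀ x, k x ≠ ⊥

/-- The recession function `k^∞` of a (convex lsc) function `k`:
`k^∞(x) = sup_{α>0} (k(x̄ + αx) − k(x̄))/α`, the supremum being taken also over all
points `x̄` of the domain of `k` (for convex lsc `k` it does not depend on `x̄`). -/
def erec {E : Type*} [AddCommGroup E] [Module ℝ E] (k : E → EReal) (x : E) : EReal :=
  ⨆ (y : E) (_ : k y < ⊤) (a : ℝ) (_ : 0 < a),
    (((a⁻¹ : ℝ)) : EReal) * (k (y + a • x) - k y)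

/-- The l.s.c. hull of the domain membership:  here simply the closure of the domain. -/
def edom {E : Type*} [TopologicalSpace E] (k : E → EReal) : Set E := closure {x | k x < ⊤}

/-- `v` belongs to the subdifferential `∂k(x)` (w.r.t. the euclidean pairing). -/
def ESubdiffAt {ι : Type*} [Fintype ι] (k : (ι → ℝ) → EReal) (x v : ι → ℝ) : Prop :=
  ∀ y : ι → ℝ, k x + ((∑ i, v i * (y i - x i) : ℝ) : EReal) ≤ k y

/-- `v` belongs to the normal cone `N_D(x)` of `D` at `x`. -/
def InNormalCone {ι : Type*} [Fintype ι] (D : Set (ι → ℝ)) (x v : ι → ℝ) : Prop :=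
  x ∈ D ∧ ∀ y ∈ D, (∑ i, v i * (y i - x i)) ≤ 0

/-- A property of points of `S = ∏ t, S t` holds `(μ_t)`-almost everywhere if it holds on
a Cartesian product of sets of full measure. -/
def ProdAE {T : ℕ} {S : Fin (T + 1) → Type*} [∀ t, MeasurableSpace (S t)]
    (μt : ∀ t, Measure (S t)) (P : (∀ t, S t) → Prop) : Prop :=
  ∃ A : ∀ t, Set (S t), (∀ t, MeasurableSet (A t) ∧ μt t (A t) = 1) ∧
    ∀ s ∈ Set.univ.pi A, P s

/-- A set-valued mapping `D : S ⇉ ℝ^d` is inner semicontinuous if the preimage of every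
open set is open. -/
def InnerSemicontinuous {X E : Type*} [TopologicalSpace X] [TopologicalSpace E]
    (D : X → Set E) : Prop :=
  ∀ O : Set E, IsOpen O → IsOpen {x | (D x ∩ O).Nonempty}

end

noncomputable section

open MeasureTheory Filter Set
open scoped ENNReal
/-! ### Continuous approximation from below -/

/-- A nonnegative lower semicontinuous function on a second countable subspace of a normal
space `X` is the supremum, along the inclusion `ι`, of an increasing sequence of nonnegative
continuous functions on `X`. -/
theorem exists_monotone_continuous_approx {S X : Type*} [TopologicalSpace S]
    [SecondCountableTopology S] [TopologicalSpace X] [NormalSpace X] [T1Space X]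
    {ι : S → X} (hι : Topology.IsInducing ι) {C : S → ℝ≥0∞} (hC : LowerSemicontinuous C) :
    ∃ g : ℕ → C(X, ℝ), Monotone g ∧ (∀ n, 0 ≤ g n) ∧
      ∀ s, ⨆ n, ENNReal.ofReal (g n (ι s)) = C s := by
  let ev : C(X, ℝ) → S → ℝ≥0∞ := fun g s => ENNReal.ofReal (g (ι s))
  let G : Set C(X, ℝ) := {g | 0 ≤ g ∧ ev g ≤ C}
  have hlub : IsLUB (ev '' G) C := by
    refine ⟨?_, fun B hB s => ?_⟩
    · rintro _ ⟨g, hg, rfl⟩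
      exact hg.2
    refine le_of_forall_lt fun q hq => ?_
    obtain ⟨r, hqr, hrC⟩ := exists_between hq
    have hrt : r ≠ ⊤ := (hrC.trans_le le_top).ne
    have hU : C ⁻¹' Ioi r ∈ nhds s := hC s r hrC
    rw [hι.nhds_eq_comap] at hU
    obtain ⟨V, hV, hVC⟩ := hU
    obtain ⟨O, hOV, hO, hsO⟩ := mem_nhds_iff.1 hV
    -- An Urysohn bump at `ι s` of height `r`, with `q < r < C s`, stays below `C`.
    obtain ⟨f, hf0, hf1, hf⟩ := exists_continuous_zero_one_of_isClosed
      (s := Oᶜ) (t := {ι s}) hO.isClosed_compl isClosed_singleton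
      (by simpa using hsO)
    have hmem : r.toReal • f ∈ G := by
      refine ⟨fun x => mul_nonneg ENNReal.toReal_nonneg (hf x).1, fun u => ?_⟩
      change ENNReal.ofReal (r.toReal * f (ι u)) ≤ C u
      by_cases hu : ι u ∈ O
      · have h1 : r < C u := hVC (hOV hu)
        calc ENNReal.ofReal (r.toReal * f (ι u)) ≤ ENNReal.ofReal r.toReal :=
              ENNReal.ofReal_le_ofReal
                (mul_le_of_le_one_right ENNReal.toReal_nonneg (hf (ι u)).2)
          _ = r := ENNReal.ofReal_toReal hrt
          _ ≤ C u := h1.le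
      · have : f (ι u) = 0 := hf0 hu
        simp [this]
    have h2 : ev (r.toReal • f) s ≤ B s := hB ⟨_, hmem, rfl⟩ s
    have h3 : ev (r.toReal • f) s = r := by
      have : f (ι s) = 1 := hf1 rfl
      simp [ev, this, ENNReal.ofReal_toReal hrt]
    exact hqr.trans_le (h3 ▸ h2)
  obtain ⟨F, hFG, hFc, hF⟩ := exists_countable_lowerSemicontinuous_isLUB
    (𝓕 := ev '' G) (s := C) (by
      rintro _ ⟨g, hg, rfl⟩
      exact (ENNReal.continuous_ofReal.comp (g.continuous.comp hι.continuous)).lowerSemicontinuous)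
    hlub
  have h0 : (0 : C(X, ℝ)) ∈ G := ⟨le_rfl, fun s => by simp [ev]⟩
  obtain ⟨e, he⟩ := (hFc.insert (ev 0)).exists_eq_range (insert_nonempty _ _)
  have heG : ∀ n, ∃ g ∈ G, ev g = e n := by
    intro n
    have : e n ∈ insert (ev 0) F := he ▸ mem_range_self n
    rcases this with h | h
    · exact ⟨0, h0, h.symm⟩
    · exact hFG h
  choose g hgG hge using heG
  have hps : ∀ n, partialSups g n ∈ G := by
    have hsup : ∀ a ∈ G, ∀ b ∈ G, a ⊔ b ∈ G := by
      intro a ha b hb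
      refine ⟨ha.1.trans le_sup_left, fun s => ?_⟩
      change ENNReal.ofReal (max (a (ι s)) (b (ι s))) ≤ C s
      rcases max_choice (a (ι s)) (b (ι s)) with h | h <;> rw [h]
      · exact ha.2 s
      · exact hb.2 s
    intro n
    induction n with
    | zero => simpa using hgG 0
    | succ n ih => simpa using hsup _ ih _ (hgG (n + 1))
  refine ⟨partialSups g, (partialSups g).monotone, fun n => (hps n).1, fun s => ?_⟩
  refine le_antisymm (iSup_le fun n => (hps n).2 s) ?_
  have : C ≤ fun s => ⨆ n, ENNReal.ofReal (partialSups g n (ι s)) := by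
    refine hF.2 ?_
    intro f hf
    have : f ∈ range e := he ▸ mem_insert_of_mem _ hf
    obtain ⟨n, rfl⟩ := this
    intro u
    rw [← hge n]
    exact le_trans (ENNReal.ofReal_le_ofReal (le_partialSups g n (ι u)))
      (le_iSup (fun n => ENNReal.ofReal (partialSups g n (ι u))) n)
  exact this s

/-! ### Duality on a compact space -/

/-- Abstract superhedging duality on a compact space: if `∫ w dν ≤ D` for each `w ∈ W` lying
below some `g ∈ G`, then there is a measure agreeing with `ν` on `W` and giving every `g ∈ G`
integral at most `D`. The functional `(w, a) ↦ ∫ w dν + a D` on `W × ℝ` is extended, positively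
with respect to the cone `{(f, a) | 0 ≤ a, 0 ≤ f + a g for some g ∈ G}`, to `C(X) × ℝ`; its
restriction to `C(X)` is represented by a measure. -/
theorem exists_measure_of_dual_bound {X : Type*} [TopologicalSpace X] [CompactSpace X]
    [T2Space X] [MeasurableSpace X] [BorelSpace X] (ν : Measure X) [IsProbabilityMeasure ν]
    (W : Submodule ℝ C(X, ℝ)) (hW : (1 : C(X, ℝ)) ∈ W) (G : Set C(X, ℝ)) (hG : Convex ℝ G)
    (hG0 : (0 : C(X, ℝ)) ∈ G) (D : ℝ)
    (hD : ∀ w ∈ W, ∀ g ∈ G, w ≤ g → ∫ x, w x ∂ν ≤ D) :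
    ∃ ρ : Measure X, IsFiniteMeasure ρ ∧ (∀ w ∈ W, ∫ x, w x ∂ρ = ∫ x, w x ∂ν) ∧
      ∀ g ∈ G, ∫ x, g x ∂ρ ≤ D := by
  have hint : ∀ (f : C(X, ℝ)) (m : Measure X) [IsFiniteMeasure m], Integrable f m := fun f m _ =>
    f.continuous.integrable_of_hasCompactSupport (HasCompactSupport.of_compactSpace _)
  let s : PointedCone ℝ (C(X, ℝ) × ℝ) :=
    { carrier := {p | 0 ≤ p.2 ∧ ∃ g ∈ G, 0 ≤ p.1 + p.2 • g}
      add_mem' := by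
        rintro ⟨f₁, a₁⟩ ⟨f₂, a₂⟩ ⟨h₁, g₁, hg₁, hf₁⟩ ⟨h₂, g₂, hg₂, hf₂⟩
        simp only at h₁ h₂ hf₁ hf₂
        refine ⟨add_nonneg h₁ h₂, ?_⟩
        rcases eq_or_lt_of_le (add_nonneg h₁ h₂) with h | h
        · have e₁ : a₁ = 0 := by linarith
          have e₂ : a₂ = 0 := by linarith
          subst e₁ e₂
          refine ⟨0, hG0, ?_⟩
          simp only [zero_smul, add_zero, Prod.mk_add_mk] at hf₁ hf₂ ⊢
          exact add_nonneg hf₁ hf₂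
        · refine ⟨(a₁ / (a₁ + a₂)) • g₁ + (a₂ / (a₁ + a₂)) • g₂,
            hG hg₁ hg₂ (by positivity) (by positivity) (by field_simp), ?_⟩
          have : (f₁ + f₂) + (a₁ + a₂) • ((a₁ / (a₁ + a₂)) • g₁ + (a₂ / (a₁ + a₂)) • g₂)
              = (f₁ + a₁ • g₁) + (f₂ + a₂ • g₂) := by
            rw [smul_add, smul_smul, smul_smul, mul_div_cancel₀ _ h.ne', mul_div_cancel₀ _ h.ne']
            abel
          simp only [Prod.mk_add_mk]
          rw [this]
          exact add_nonneg hf₁ hf₂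
      zero_mem' := ⟨le_rfl, 0, hG0, by simp⟩
      smul_mem' := by
        rintro ⟨r, hr⟩ ⟨f, a⟩ ⟨h, g, hg, hf⟩
        refine ⟨mul_nonneg hr h, g, hg, ?_⟩
        have : r • f + (r * a) • g = r • (f + a • g) := by rw [smul_add, smul_smul]
        change 0 ≤ r • f + (r * a) • g
        rw [this]
        exact smul_nonneg hr hf }
  let L : C(X, ℝ) × ℝ →ₗ[ℝ] ℝ :=
    { toFun := fun p => ∫ x, p.1 x ∂ν + p.2 * D
      map_add' := by
        rintro ⟨f₁, a₁⟩ ⟨f₂, a₂⟩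
        simp only [Prod.mk_add_mk, ContinuousMap.add_apply]
        rw [integral_add (hint f₁ ν) (hint f₂ ν)]
        ring
      map_smul' := by
        rintro r ⟨f, a⟩
        simp only [Prod.smul_mk, ContinuousMap.smul_apply, smul_eq_mul, RingHom.id_apply]
        rw [integral_const_mul]
        ring }
  obtain ⟨Λ, hΛL, hΛs⟩ := riesz_extension s ⟨W.prod ⊤, L.domRestrict (W.prod ⊤)⟩ (by
      rintro ⟨⟨f, a⟩, hf⟩ ⟨ha, g, hg, hfg⟩
      have hfW : f ∈ W := hf.1
      simp only at ha hfg
      change 0 ≤ ∫ x, f x ∂ν + a * D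
      rcases eq_or_lt_of_le ha with h | h
      · subst h
        simp only [zero_smul, add_zero] at hfg
        simpa using integral_nonneg (μ := ν) (f := f) hfg
      · have h1 := hD ((-a⁻¹) • f) (W.smul_mem _ hfW) g hg (by
          intro x
          have : 0 ≤ f x + a * g x := hfg x
          change -a⁻¹ * f x ≤ g x
          have h3 : a⁻¹ * (f x + a * g x) = a⁻¹ * f x + g x := by field_simp
          have h4 : 0 ≤ a⁻¹ * (f x + a * g x) := mul_nonneg (inv_nonneg.2 ha) this
          linarith)
        simp only [ContinuousMap.smul_apply, smul_eq_mul] at h1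
        rw [integral_const_mul] at h1
        have h2 := mul_le_mul_of_nonneg_left h1 ha
        have h3 : a * (-a⁻¹ * ∫ x, f x ∂ν) = - ∫ x, f x ∂ν := by field_simp
        linarith) (by
      rintro ⟨f, r⟩
      refine ⟨⟨(‖f‖ • 1, -r), ⟨W.smul_mem _ hW, trivial⟩⟩, ?_⟩
      refine ⟨by simp, 0, hG0, fun x => ?_⟩
      have := neg_le_of_abs_le (f.norm_coe_le_norm x)
      simp
      linarith)
  have hpos : ∀ f : C(X, ℝ), 0 ≤ f → 0 ≤ Λ (f, 0) := fun f hf =>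
    hΛs _ ⟨le_rfl, 0, hG0, by simpa using hf⟩
  let P : CompactlySupportedContinuousMap X ℝ →ₚ[ℝ] ℝ := PositiveLinearMap.mk₀
    { toFun := fun f => Λ (f.toContinuousMap, 0)
      map_add' := fun f g => by
        rw [← map_add]; congr 1; ext <;> simp
      map_smul' := fun r f => by
        rw [RingHom.id_apply, ← map_smul]; congr 1; ext <;> simp }
    (fun f hf => hpos _ hf)
  have hP : ∀ f : C(X, ℝ), ∫ x, f x ∂(RealRMK.rieszMeasure P) = Λ (f, 0) := fun f => by
    have := RealRMK.integral_rieszMeasure P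
      (CompactlySupportedContinuousMap.continuousMapEquiv f)
    exact this
  have : IsFiniteMeasure (RealRMK.rieszMeasure P) := inferInstance
  refine ⟨RealRMK.rieszMeasure P, inferInstance, fun w hw => ?_, fun g hg => ?_⟩
  · rw [hP, hΛL ⟨(w, 0), ⟨hw, trivial⟩⟩]
    change ∫ x, w x ∂ν + 0 * D = _
    simp
  · rw [hP]
    have h1 : 0 ≤ Λ (-g, 1) := hΛs _ ⟨zero_le_one, g, hg, by simp⟩
    have h2 : Λ (0, 1) = D := by
      rw [hΛL ⟨(0, 1), ⟨W.zero_mem, trivial⟩⟩]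
      change ∫ x, (0 : C(X, ℝ)) x ∂ν + 1 * D = _
      simp
    have h3 : Λ (0, 1) = Λ (g, 0) + Λ (-g, 1) := by
      rw [← map_add]; congr 1; ext <;> simp
    linarith

/-! ### Couplings on products of Polish spaces -/

/-- The integral of `Σ x_t` under a coupling depends only on the marginals. -/
theorem integral_sum_eval {T : ℕ} {S : Fin (T + 1) → Type*} [∀ t, MeasurableSpace (S t)]
    (μt : ∀ t, Measure (S t)) {m : Measure (∀ t, S t)} (hm : ∀ t, m.map (fun s => s t) = μt t)
    {x : ∀ t, S t → ℝ} (hx : ∀ t, Integrable (x t) (μt t)) :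
    Integrable (fun s => ∑ t, x t (s t)) m ∧
      ∫ s, ∑ t, x t (s t) ∂m = ∑ t, ∫ u, x t u ∂(μt t) := by
  have hi : ∀ t, Integrable (fun s => x t (s t)) m := fun t => by
    have := hx t
    rw [← hm t] at this
    exact this.comp_measurable (measurable_pi_apply t)
  refine ⟨integrable_finsetSum _ fun t _ => hi t, ?_⟩
  rw [integral_finsetSum _ fun t _ => hi t]
  refine Finset.sum_congr rfl fun t _ => ?_
  have := (hx t).aestronglyMeasurable
  rw [← hm t] at this
  rw [← integral_map (measurable_pi_apply t).aemeasurable this, hm t]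

theorem pi_map_coord {T : ℕ} {S : Fin (T + 1) → Type*} [∀ t, MeasurableSpace (S t)]
    (μt : ∀ t, Measure (S t)) [∀ t, IsProbabilityMeasure (μt t)] (t : Fin (T + 1)) :
    (Measure.pi μt).map (fun s => s t) = μt t :=
  (measurePreserving_eval μt t).map_eq

/-- If `Σ ∫ φ_t dμ_t ≤ D` for all continuous integrable potentials with `Σ φ_t ≤ C`, then some
coupling has cost at most `D`. The spaces are embedded into the Hilbert cube and
`exists_measure_of_dual_bound` is applied on the product of cubes; a measure there whose
marginals are the images of the `μ_t` is carried by the image of `∏ S_t`, so no tightness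
argument is needed. -/
theorem exists_coupling_of_dual_bound {T : ℕ} {S : Fin (T + 1) → Type*}
    [∀ t, TopologicalSpace (S t)] [∀ t, PolishSpace (S t)]
    [∀ t, MeasurableSpace (S t)] [∀ t, BorelSpace (S t)]
    (μt : ∀ t, Measure (S t)) [∀ t, IsProbabilityMeasure (μt t)]
    {C : (∀ t, S t) → ℝ≥0∞} (hC : LowerSemicontinuous C) (D : ℝ)
    (hD : ∀ φ : ∀ t, S t → ℝ, (∀ t, Continuous (φ t)) → (∀ t, Integrable (φ t) (μt t)) →
      (∀ s, ENNReal.ofReal (∑ t, φ t (s t)) ≤ C s) → ∑ t, ∫ u, φ t u ∂(μt t) ≤ D) :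
    ∃ lam : Measure (∀ t, S t), (∀ t, lam.map (fun s => s t) = μt t) ∧
      ∫⁻ s, C s ∂lam ≤ ENNReal.ofReal D := by
  let H := ℕ → unitInterval
  have hj : ∀ t, ∃ j : S t → H, Topology.IsEmbedding j := fun t => by
    let := TopologicalSpace.metrizableSpaceMetric (S t)
    exact Metric.PiNatEmbed.exists_embedding_to_hilbert_cube
  choose j hj using hj
  have hjm : ∀ t, MeasurableEmbedding (j t) := fun t =>
    (hj t).continuous.measurableEmbedding (hj t).injective
  let X := Fin (T + 1) → H
  let ι : (∀ t, S t) → X := fun s t => j t (s t)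
  have hιe : Topology.IsEmbedding ι := Topology.IsEmbedding.piMap hj
  have hιm : MeasurableEmbedding ι := hιe.continuous.measurableEmbedding hιe.injective
  let ν : Measure X := (Measure.pi μt).map ι
  have : IsProbabilityMeasure ν :=
    Measure.isProbabilityMeasure_map hιm.measurable.aemeasurable
  have hνc : ∀ t, ν.map (fun y => y t) = (μt t).map (j t) := fun t => by
    rw [Measure.map_map (measurable_pi_apply t) hιm.measurable, ← pi_map_coord μt t,
      Measure.map_map (hjm t).measurable (measurable_pi_apply t)]
    rfl
  let ev : ∀ t, C(X, H) := fun t => ⟨fun y => y t, continuous_apply t⟩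
  let A : (Fin (T + 1) → C(H, ℝ)) →ₗ[ℝ] C(X, ℝ) :=
    { toFun := fun φ => ∑ t, (φ t).comp (ev t)
      map_add' := fun φ φ' => by
        ext y; simp [Finset.sum_add_distrib]
      map_smul' := fun r φ => by
        ext y; simp [Finset.mul_sum] }
  have hA : ∀ φ y, A φ y = ∑ t, φ t (y t) := fun φ y => by
    simp [A, ContinuousMap.sum_apply, ev]
  have hsingle : ∀ t (f : C(H, ℝ)), f.comp (ev t) ∈ LinearMap.range A := fun t f => by
    refine ⟨Pi.single t f, ?_⟩
    ext y
    rw [hA, Finset.sum_eq_single t]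
    · simp [ev]
    · intro t' _ h; simp [h]
    · simp
  let G : Set C(X, ℝ) := {g | ∀ s, ENNReal.ofReal (g (ι s)) ≤ C s}
  obtain ⟨ρ, hρf, hρW, hρG⟩ := exists_measure_of_dual_bound ν (LinearMap.range A)
    (by simpa using hsingle 0 1) G
    (by
      intro g₁ h₁ g₂ h₂ a b ha hb hab s
      change ENNReal.ofReal (a * g₁ (ι s) + b * g₂ (ι s)) ≤ C s
      rcases le_total (g₁ (ι s)) (g₂ (ι s)) with h | h
      · refine le_trans (ENNReal.ofReal_le_ofReal ?_) (h₂ s)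
        nlinarith [mul_nonneg ha (sub_nonneg.2 h), congrArg (· * g₂ (ι s)) hab]
      · refine le_trans (ENNReal.ofReal_le_ofReal ?_) (h₁ s)
        nlinarith [mul_nonneg hb (sub_nonneg.2 h), congrArg (· * g₁ (ι s)) hab])
    (fun s => by simp) D
    (by
      rintro _ ⟨φ, rfl⟩ g hg hle
      have hφi : ∀ t, Integrable (fun u => φ t (j t u)) (μt t) := fun t => by
        have : Integrable (φ t) ((μt t).map (j t)) :=
          (φ t).continuous.integrable_of_hasCompactSupport (HasCompactSupport.of_compactSpace _)
        exact this.comp_measurable (hjm t).measurable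
      have h1 := hD (fun t u => φ t (j t u)) (fun t => (φ t).continuous.comp (hj t).continuous)
        hφi (fun s => by
          refine le_trans (ENNReal.ofReal_le_ofReal ?_) (hg s)
          have : A φ (ι s) ≤ g (ι s) := hle (ι s)
          rwa [hA] at this)
      refine le_trans (le_of_eq ?_) h1
      rw [integral_map hιm.measurable.aemeasurable (A φ).continuous.aestronglyMeasurable]
      simp_rw [hA]
      exact (integral_sum_eval μt (pi_map_coord μt) (x := fun t u => φ t (j t u)) hφi).2)
  -- The marginals of `ρ` are tested against continuous functions of one coordinate.
  have hρc : ∀ t, ρ.map (fun y => y t) = (μt t).map (j t) := fun t => by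
    rw [← hνc t]
    refine ext_of_forall_integral_eq_of_IsFiniteMeasure fun f => ?_
    rw [integral_map (measurable_pi_apply t).aemeasurable f.continuous.aestronglyMeasurable,
      integral_map (measurable_pi_apply t).aemeasurable f.continuous.aestronglyMeasurable]
    exact hρW _ (hsingle t f.toContinuousMap)
  have hrange : ρ (range ι)ᶜ = 0 := by
    have hsub : (range ι)ᶜ ⊆ ⋃ t, (fun y : X => y t) ⁻¹' (range (j t))ᶜ := by
      intro y hy
      by_contra hcon
      simp only [mem_iUnion, mem_preimage, mem_compl_iff, not_exists, not_not] at hcon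
      choose s hs using hcon
      exact hy ⟨s, funext hs⟩
    refine measure_mono_null hsub (measure_iUnion_null fun t => ?_)
    rw [← Measure.map_apply (measurable_pi_apply t) (hjm t).measurableSet_range.compl, hρc t,
      Measure.map_apply (hjm t).measurable (hjm t).measurableSet_range.compl]
    simp
  have hmap : (ρ.comap ι).map ι = ρ := by
    rw [hιm.map_comap]
    exact Measure.restrict_eq_self_of_ae_mem (by
      rw [ae_iff]; exact hrange)
  refine ⟨ρ.comap ι, fun t => ?_, ?_⟩
  · have h1 : ((ρ.comap ι).map (fun s => s t)).map (j t) = (μt t).map (j t) := by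
      rw [← hρc t]
      conv_rhs => rw [← hmap]
      rw [Measure.map_map (measurable_pi_apply t) hιm.measurable,
        Measure.map_map (hjm t).measurable (measurable_pi_apply t)]
      rfl
    rw [← (hjm t).comap_map ((ρ.comap ι).map (fun s => s t)), h1, (hjm t).comap_map]
  · obtain ⟨g, hgm, hg0, hgC⟩ := exists_monotone_continuous_approx hιe.isInducing hC
    simp_rw [← hgC]
    rw [lintegral_iSup (f := fun n s => ENNReal.ofReal (g n (ι s)))
      (fun n => ((g n).continuous.measurable.comp hιm.measurable).ennreal_ofReal)
      (fun n m h s => ENNReal.ofReal_le_ofReal (hgm h _))]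
    refine iSup_le fun n => ?_
    rw [← hιm.lintegral_map (fun y => ENNReal.ofReal (g n y)), hmap,
      ← ofReal_integral_eq_lintegral_ofReal
        ((g n).continuous.integrable_of_hasCompactSupport (HasCompactSupport.of_compactSpace _))
        (Eventually.of_forall (hg0 n))]
    refine ENNReal.ofReal_le_ofReal (hρG _ fun s => ?_)
    rw [← hgC s]
    exact le_iSup (fun n => ENNReal.ofReal (g n (ι s))) n

/-! ### Almost sure convergence of near-minimizers -/

/-- A convergence principle of Komlós type: a decreasing sequence of nonempty midpoint-closed
sets of nonnegative random variables, bounded in `L¹`, admits members converging almost surely to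
a finite limit. The members are near-minimizers of `∫ e^(-f)`; strict convexity of the exponential
makes the functions `e^(-f/2)` Cauchy in `L²`. -/
theorem exists_ae_convergent {Ω : Type*} [MeasurableSpace Ω] (P : Measure Ω)
    [IsProbabilityMeasure P] (V : ℕ → Set (Ω → ℝ)) (hV : Antitone V) (hne : ∀ n, (V n).Nonempty)
    (hmid : ∀ n, ∀ f ∈ V n, ∀ g ∈ V n, (fun ω => (f ω + g ω) / 2) ∈ V n)
    (hmeas : ∀ f ∈ V 0, Measurable f) (hnn : ∀ f ∈ V 0, ∀ᵐ ω ∂P, 0 ≤ f ω)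
    {M : ℝ≥0∞} (hMt : M ≠ ⊤) (hM : ∀ f ∈ V 0, ∫⁻ ω, ENNReal.ofReal (f ω) ∂P ≤ M) :
    ∃ f : ℕ → Ω → ℝ, (∀ n, f n ∈ V n) ∧
      ∀ᵐ ω ∂P, ∃ l : ℝ, Tendsto (fun n => f n ω) atTop (nhds l) := by
  have hV0 : ∀ n, V n ⊆ V 0 := fun n => hV (Nat.zero_le n)
  let J : (Ω → ℝ) → ℝ := fun f => ∫ ω, Real.exp (-f ω) ∂P
  have hJi : ∀ f ∈ V 0, Integrable (fun ω => Real.exp (-f ω)) P := fun f hf => by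
    refine Integrable.of_bound (C := 1)
      (Real.measurable_exp.comp (hmeas f hf).neg).aestronglyMeasurable ?_
    filter_upwards [hnn f hf] with ω hω
    rw [Real.norm_of_nonneg (Real.exp_nonneg _)]
    exact Real.exp_le_one_iff.2 (by linarith)
  have hJ0 : ∀ f, 0 ≤ J f := fun f => integral_nonneg fun ω => Real.exp_nonneg _
  have hJ1 : ∀ f ∈ V 0, J f ≤ 1 := fun f hf => by
    have : J f ≤ ∫ _, (1 : ℝ) ∂P := by
      refine integral_mono_ae (hJi f hf) (integrable_const _) ?_
      filter_upwards [hnn f hf] with ω hω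
      exact Real.exp_le_one_iff.2 (by linarith)
    simpa using this
  let I : ℕ → ℝ := fun n => sInf (J '' V n)
  have hbdd : ∀ n, BddBelow (J '' V n) := fun n => ⟨0, by rintro _ ⟨f, -, rfl⟩; exact hJ0 f⟩
  have hImono : Monotone I := fun n m h =>
    csInf_le_csInf (hbdd n) ((hne m).image J) (image_mono (hV h))
  have hIle : ∀ n, ∀ f ∈ V n, I n ≤ J f := fun n f hf => csInf_le (hbdd n) ⟨f, hf, rfl⟩
  have hIb : BddAbove (range I) := ⟨1, by
    rintro _ ⟨n, rfl⟩
    obtain ⟨f, hf⟩ := hne n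
    exact (hIle n f hf).trans (hJ1 f (hV0 n hf))⟩
  have hIlim : Tendsto I atTop (nhds (⨆ n, I n)) := tendsto_atTop_ciSup hImono hIb
  have hg : ∀ n : ℕ, ∃ g ∈ V n, J g < I n + 1 / ((n : ℝ) + 1) := fun n => by
    obtain ⟨_, ⟨g, hg, rfl⟩, h⟩ := exists_lt_of_csInf_lt ((hne n).image J)
      (show sInf (J '' V n) < I n + 1 / ((n : ℝ) + 1) from
        lt_add_of_pos_right _ Nat.one_div_pos_of_nat)
    exact ⟨g, hg, h⟩
  choose g hgV hgJ using hg
  let e : ℕ → Ω → ℝ := fun n ω => Real.exp (-g n ω / 2)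
  have hem : ∀ n, Measurable (e n) := fun n =>
    Real.measurable_exp.comp (((hmeas _ (hV0 n (hgV n))).neg).div_const 2)
  let η : ℕ → ℝ := fun n => ((⨆ n, I n) - I n) + 2 * (1 / ((n : ℝ) + 1))
  have hη : Tendsto η atTop (nhds 0) := by
    have h1 := (hIlim.const_sub (⨆ n, I n)).add
      ((tendsto_one_div_add_atTop_nhds_zero_nat (𝕜 := ℝ)).const_mul 2)
    rw [sub_self, mul_zero, add_zero] at h1
    exact h1
  have hδ : ∀ n m : ℕ, n ≤ m → 1 / ((m : ℝ) + 1) ≤ 1 / ((n : ℝ) + 1) := fun n m h =>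
    Nat.one_div_le_one_div h
  have hηanti : Antitone η := fun n m h => by
    have := hδ n m h
    have := hImono h
    simp only [η]
    linarith
  -- With `u = e^(-a/2)` and `v = e^(-b/2)`, `(u - v)^2 = e^(-a) + e^(-b) - 2 e^(-(a+b)/2)`: the first
  -- two terms are almost `I n` in mean and the last one is at least `2 (I n)` in mean.
  have hsq : ∀ n m, (fun ω => (e n ω - e m ω) ^ 2) = fun ω =>
      Real.exp (-g n ω) + Real.exp (-g m ω) - 2 * Real.exp (-((g n ω + g m ω) / 2)) := by
    intro n m
    funext ω
    have h1 : Real.exp (-g n ω) = e n ω ^ 2 := by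
      simp only [e, sq, ← Real.exp_add]; congr 1; ring
    have h2 : Real.exp (-g m ω) = e m ω ^ 2 := by
      simp only [e, sq, ← Real.exp_add]; congr 1; ring
    have h3 : Real.exp (-((g n ω + g m ω) / 2)) = e n ω * e m ω := by
      simp only [e, ← Real.exp_add]; congr 1; ring
    rw [h1, h2, h3]; ring
  have hcau' : ∀ n m, n ≤ m → Integrable (fun ω => (e n ω - e m ω) ^ 2) P ∧
      ∫ ω, (e n ω - e m ω) ^ 2 ∂P ≤ η n := by
    intro n m h
    have hmV := hV h (hgV m)
    have hmd := hmid n _ (hgV n) _ hmV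
    have i1 := hJi _ (hV0 n (hgV n))
    have i2 := hJi _ (hV0 m (hgV m))
    have i3 := (hJi _ (hV0 n hmd)).const_mul 2
    rw [hsq]
    refine ⟨(i1.add i2).sub i3, ?_⟩
    have h0 : ∫ ω, (Real.exp (-g n ω) + Real.exp (-g m ω)
        - 2 * Real.exp (-((g n ω + g m ω) / 2))) ∂P
        = J (g n) + J (g m) - 2 * J (fun ω => (g n ω + g m ω) / 2) := by
      rw [← integral_const_mul, ← integral_add i1 i2]
      exact integral_sub (i1.add i2) i3
    rw [h0]
    have h1 := hgJ n
    have h2 := hgJ m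
    have h3 := hIle n _ hmd
    have h4 := hδ n m h
    have h5 := le_ciSup hIb m
    simp only [η]
    linarith
  have hcau : ∀ N n m, N ≤ n → N ≤ m → Integrable (fun ω => (e n ω - e m ω) ^ 2) P ∧
      ∫ ω, (e n ω - e m ω) ^ 2 ∂P ≤ η N := by
    intro N n m hn hm
    rcases le_total n m with h | h
    · exact ⟨(hcau' n m h).1, (hcau' n m h).2.trans (hηanti hn)⟩
    · have hs : (fun ω => (e n ω - e m ω) ^ 2) = fun ω => (e m ω - e n ω) ^ 2 := by
        funext ω; ring
      rw [hs]
      exact ⟨(hcau' m n h).1, (hcau' m n h).2.trans (hηanti hm)⟩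
  -- Along a subsequence the `L²` increments are summable, which gives almost sure convergence.
  obtain ⟨k, hk, hkη⟩ := extraction_forall_of_eventually
    (P := fun n N => η N < ((1 / 2 : ℝ) ^ n) ^ 2)
    (fun n => hη.eventually_lt_const (by positivity))
  have hconv : ∀ᵐ ω ∂P, ∃ l : ℝ, Tendsto (fun n => e (k n) ω) atTop (nhds l) := by
    refine Lp.ae_tendsto_of_cauchy_eLpNorm' (p := 2) (f := fun n => e (k n))
      (B := fun n => ENNReal.ofReal ((1 / 2 : ℝ) ^ n))
      (fun n => (hem _).aestronglyMeasurable) one_le_two ?_ ?_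
    · rw [← ENNReal.ofReal_tsum_of_nonneg (fun n => by positivity) summable_geometric_two]
      exact ENNReal.ofReal_ne_top
    · intro N n m hn hm
      obtain ⟨h1, h2⟩ := hcau (k N) (k n) (k m) (hk.monotone hn) (hk.monotone hm)
      have h3 := h2.trans_lt (hkη N)
      have h4 : ∫⁻ ω, ‖(e (k n) - e (k m)) ω‖ₑ ^ (2 : ℝ) ∂P
          = ENNReal.ofReal (∫ ω, (e (k n) ω - e (k m) ω) ^ 2 ∂P) := by
        rw [ofReal_integral_eq_lintegral_ofReal h1 (Eventually.of_forall fun ω => sq_nonneg _)]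
        refine lintegral_congr fun ω => ?_
        rw [ENNReal.rpow_two, ← ofReal_norm, ← ENNReal.ofReal_pow (norm_nonneg _)]
        simp
      rw [eLpNorm'_eq_lintegral_enorm, h4]
      have h5 : ∀ b : ℝ, 0 ≤ b →
          ENNReal.ofReal b = (ENNReal.ofReal (b ^ 2)) ^ (1 / 2 : ℝ) := fun b hb => by
        rw [ENNReal.ofReal_pow hb, ← ENNReal.rpow_two, ← ENNReal.rpow_mul]
        norm_num
      rw [h5 ((1 / 2 : ℝ) ^ N) (by positivity)]
      exact ENNReal.rpow_lt_rpow ((ENNReal.ofReal_lt_ofReal_iff (by positivity)).2 h3)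
        (by norm_num)
  -- By Fatou the liminf is finite, so the limit of `e^(-g/2)` is positive.
  have hfin : ∀ᵐ ω ∂P, liminf (fun n => ENNReal.ofReal (g (k n) ω)) atTop < ⊤ := by
    refine ae_lt_top (Measurable.liminf fun n =>
      (hmeas _ (hV0 _ (hgV _))).ennreal_ofReal) ?_
    refine ne_top_of_le_ne_top hMt ?_
    refine (lintegral_liminf_le' fun n => (hmeas _ (hV0 _ (hgV _))).ennreal_ofReal.aemeasurable).trans ?_
    exact (liminf_le_liminf (Eventually.of_forall fun n => hM _ (hV0 _ (hgV (k n))))).trans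
      (by simp)
  refine ⟨fun n => g (k n), fun n => hV (hk.id_le n) (hgV _), ?_⟩
  filter_upwards [hconv, hfin] with ω ⟨l, hl⟩ hω
  have hl0 : 0 ≤ l := ge_of_tendsto' hl fun n => Real.exp_nonneg _
  rcases eq_or_lt_of_le hl0 with h | h
  · exfalso
    subst h
    have h1 : Tendsto (fun n => -g (k n) ω / 2) atTop atBot :=
      Real.tendsto_exp_comp_nhds_zero.1 hl
    have h2 : Tendsto (fun n => g (k n) ω) atTop atTop := by
      have := (tendsto_neg_atBot_atTop.comp h1).const_mul_atTop (show (0 : ℝ) < 2 by norm_num)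
      refine this.congr fun n => ?_
      simp only [Function.comp]; ring
    have h3 := (ENNReal.tendsto_ofReal_atTop.comp h2).liminf_eq
    exact hω.ne h3
  · refine ⟨-2 * Real.log l, ?_⟩
    refine (((Real.continuousAt_log h.ne').tendsto.comp hl).const_mul (-2)).congr fun n => ?_
    simp only [Function.comp, e, Real.log_exp]; ring

/-! ### Attainment in the relaxed dual problem -/

section Product

variable {T : ℕ} {S : Fin (T + 1) → Type*} [∀ t, MeasurableSpace (S t)]
  (μt : ∀ t, Measure (S t)) [∀ t, IsProbabilityMeasure (μt t)]

theorem measurable_update_pair (t : Fin (T + 1)) :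
    Measurable (fun p : (∀ t, S t) × S t => Function.update p.1 t p.2) := by
  refine measurable_pi_lambda _ fun r => ?_
  by_cases h : r = t
  · subst h
    simpa using measurable_snd
  · simp only [Function.update_of_ne h]
    exact (measurable_pi_apply r).comp measurable_fst

/-- Resampling one coordinate independently preserves the product measure. -/
theorem measurePreserving_update (t : Fin (T + 1)) :
    MeasurePreserving (fun p : (∀ t, S t) × S t => Function.update p.1 t p.2)
      ((Measure.pi μt).prod (μt t)) (Measure.pi μt) := by
  refine ⟨measurable_update_pair t, (Measure.pi_eq fun B hB => ?_).symm⟩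
  rw [Measure.map_apply (measurable_update_pair t) (MeasurableSet.univ_pi hB)]
  have hpre : (fun p : (∀ t, S t) × S t => Function.update p.1 t p.2) ⁻¹' univ.pi B
      = (univ.pi (Function.update B t univ)) ×ˢ B t := by
    ext ⟨s, u⟩
    simp only [mem_preimage, Set.mem_pi, mem_univ, true_implies, mem_prod]
    constructor
    · intro h
      refine ⟨fun r => ?_, by simpa using h t⟩
      by_cases hr : r = t
      · subst hr; simp
      · simpa [Function.update_of_ne hr] using h r
    · rintro ⟨h, hu⟩ r
      by_cases hr : r = t
      · subst hr; simpa using hu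
      · simpa [Function.update_of_ne hr] using h r
  rw [hpre, Measure.prod_prod, Measure.pi_pi, ← Finset.mul_prod_erase _ _ (Finset.mem_univ t),
    ← Finset.mul_prod_erase Finset.univ (fun i => μt i (B i)) (Finset.mem_univ t)]
  have : ∏ r ∈ Finset.univ.erase t, μt r (Function.update B t univ r)
      = ∏ r ∈ Finset.univ.erase t, μt r (B r) :=
    Finset.prod_congr rfl fun r hr => by
      rw [Function.update_of_ne (Finset.ne_of_mem_erase hr)]
  rw [this]
  simp [mul_comm]

theorem ae_ae_update {P : (∀ t, S t) → Prop} (h : ∀ᵐ s ∂(Measure.pi μt), P s) :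
    ∀ᵐ s ∂(Measure.pi μt), ∀ t, ∀ᵐ u ∂(μt t), P (Function.update s t u) :=
  ae_all_iff.2 fun t =>
    Measure.ae_ae_of_ae_prod ((measurePreserving_update μt t).quasiMeasurePreserving.ae h)

theorem ae_integrable_update {f : (∀ t, S t) → ℝ} (h : Integrable f (Measure.pi μt)) :
    ∀ᵐ s ∂(Measure.pi μt), ∀ t, Integrable (fun u => f (Function.update s t u)) (μt t) :=
  ae_all_iff.2 fun t =>
    ((measurePreserving_update μt t).integrable_comp_of_integrable h).prod_right_ae

omit [∀ t, MeasurableSpace (S t)] in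
theorem sum_update_eq (x : ∀ t, S t → ℝ) (s : ∀ t, S t) (t : Fin (T + 1)) (u : S t) :
    ∑ r, x r (Function.update s t u r) = ∑ r, x r (s r) + (x t u - x t (s t)) := by
  rw [← Finset.add_sum_erase _ _ (Finset.mem_univ t),
    ← Finset.add_sum_erase Finset.univ (fun r => x r (s r)) (Finset.mem_univ t)]
  have : ∑ r ∈ Finset.univ.erase t, x r (Function.update s t u r)
      = ∑ r ∈ Finset.univ.erase t, x r (s r) :=
    Finset.sum_congr rfl fun r hr => by
      rw [Function.update_of_ne (Finset.ne_of_mem_erase hr)]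
  rw [this]
  simp only [Function.update_self]
  ring

/-- If a sum of functions of separate variables is integrable for the product measure, then by
Fubini a section through a generic point shows that each summand is integrable. -/
theorem integrable_of_integrable_sum {x : ∀ t, S t → ℝ}
    (h : Integrable (fun s => ∑ t, x t (s t)) (Measure.pi μt)) (t : Fin (T + 1)) :
    Integrable (x t) (μt t) := by
  obtain ⟨s, hs⟩ := (ae_integrable_update μt h).exists
  have h1 := hs t
  simp only [sum_update_eq] at h1
  have h2 := h1.sub (integrable_const (∑ r, x r (s r) - x t (s t)))
  refine h2.congr (Eventually.of_forall fun u => ?_)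
  simp only [Pi.sub_apply]
  ring

/-- A lower bound on `Σ x_t` by an integrable function yields integrable lower bounds for the
individual `x_t`, by freezing the other coordinates at a generic point. -/
theorem exists_integrable_neg_le {x : ∀ t, S t → ℝ} {r : (∀ t, S t) → ℝ}
    (hr : Integrable r (Measure.pi μt))
    (h : ∀ᵐ s ∂(Measure.pi μt), -(∑ t, x t (s t)) ≤ r s) (t : Fin (T + 1)) :
    ∃ f : S t → ℝ, Integrable f (μt t) ∧ ∀ᵐ u ∂(μt t), -x t u ≤ f u := by
  obtain ⟨s, hs, hs'⟩ := ((ae_integrable_update μt hr).and (ae_ae_update μt h)).exists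
  refine ⟨_, (hs t).add (integrable_const (∑ q, x q (s q) - x t (s t))), ?_⟩
  filter_upwards [hs' t] with u hu
  rw [sum_update_eq] at hu
  simp only [Pi.add_apply]
  linarith

omit [∀ t, IsProbabilityMeasure (μt t)] in
/-- A property holding on a product of full-measure sets holds almost surely for every coupling,
including couplings singular to the product measure. -/
theorem ProdAE.ae {P : (∀ t, S t) → Prop} (h : ProdAE μt P) {m : Measure (∀ t, S t)}
    [∀ t, IsProbabilityMeasure (μt t)]
    (hm : ∀ t, m.map (fun s => s t) = μt t) : ∀ᵐ s ∂m, P s := by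
  obtain ⟨A, hA, hP⟩ := h
  have h1 : ∀ t, ∀ᵐ s ∂m, s t ∈ A t := fun t => by
    refine ae_of_ae_map (p := fun u => u ∈ A t) (measurable_pi_apply t).aemeasurable ?_
    rw [hm t]
    exact (mem_ae_iff_prob_eq_one (hA t).1).2 (hA t).2
  filter_upwards [ae_all_iff.2 h1] with s hs
  exact hP s fun t _ => hs t

theorem prodAE_of_ae {A : ∀ t, S t → Prop} (hA : ∀ t, ∀ᵐ u ∂(μt t), A t u)
    {P : (∀ t, S t) → Prop} (hP : ∀ s, (∀ t, A t (s t)) → P s) : ProdAE μt P := by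
  have : ∀ t, ∃ B ⊆ {u | A t u}, MeasurableSet B ∧ B ∈ ae (μt t) := fun t => by
    obtain ⟨B, hB, hBm, hBA⟩ := (hA t).exists_measurable_mem
    exact ⟨B, hBA, hBm, hB⟩
  choose B hBA hBm hB using this
  exact ⟨B, fun t => ⟨hBm t, (mem_ae_iff_prob_eq_one (hBm t)).1 (hB t)⟩,
    fun s hs => hP s fun t => hBA t (hs t trivial)⟩

theorem ProdAE.exists_ae {P : (∀ t, S t) → Prop} (h : ProdAE μt P) :
    ∃ A : ∀ t, S t → Prop, (∀ t, ∀ᵐ u ∂(μt t), A t u) ∧ ∀ s, (∀ t, A t (s t)) → P s := by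
  obtain ⟨A, hA, hP⟩ := h
  exact ⟨fun t u => u ∈ A t, fun t => (mem_ae_iff_prob_eq_one (hA t).1).2 (hA t).2,
    fun s hs => hP s fun t _ => hs t⟩

/-- Attainment in the relaxed dual problem, restricted to points with integrable sum. A
minimizing sequence is chosen by `exists_ae_convergent` so that the sums converge almost
everywhere; the coordinates then converge after recentring, and Fatou's lemma bounds the objective
at the limit. -/
theorem exists_dual_minimizer (c : (∀ t, S t) → EReal) (r : (∀ t, S t) → ℝ) (hrm : Measurable r)
    (hr : Integrable r (Measure.pi μt)) (hcr : ∀ᵐ s ∂(Measure.pi μt), c s = r s)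
    (F : Set (∀ t, S t → ℝ))
    (hF : F = {x | (∀ t, Measurable (x t)) ∧
      ProdAE μt (fun s => (-(∑ t, x t (s t) : ℝ) : EReal) ≤ c s) ∧
      Integrable (fun s => ∑ t, x t (s t)) (Measure.pi μt)})
    (hne : F.Nonempty) :
    ∃ x ∈ F, ∀ x' ∈ F, ∫ s, ∑ t, x t (s t) ∂(Measure.pi μt)
      ≤ ∫ s, ∑ t, x' t (s t) ∂(Measure.pi μt) := by
  let μ := Measure.pi μt
  let Φ : (∀ t, S t → ℝ) → (∀ t, S t) → ℝ := fun x s => ∑ t, x t (s t)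
  have hFm : ∀ x ∈ F, ∀ t, Measurable (x t) := by rw [hF]; exact fun x hx => hx.1
  have hFp : ∀ x ∈ F, ProdAE μt (fun s => (-(Φ x s : ℝ) : EReal) ≤ c s) := by
    rw [hF]; exact fun x hx => hx.2.1
  have hFi : ∀ x ∈ F, Integrable (Φ x) μ := by rw [hF]; exact fun x hx => hx.2.2
  have hΦm : ∀ x ∈ F, Measurable (Φ x) := fun x hx =>
    Finset.measurable_sum _ fun t _ => (hFm x hx t).comp (measurable_pi_apply t)
  have hnn : ∀ x ∈ F, ∀ᵐ s ∂μ, 0 ≤ Φ x s + r s := fun x hx => by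
    filter_upwards [(hFp x hx).ae μt (pi_map_coord μt), hcr] with s h1 h2
    rw [h2] at h1
    have : -(Φ x s) ≤ r s := by exact_mod_cast h1
    linarith
  have hlow : ∀ x ∈ F, -∫ s, r s ∂μ ≤ ∫ s, Φ x s ∂μ := fun x hx => by
    have := integral_nonneg_of_ae (hnn x hx)
    rw [integral_add (hFi x hx) hr] at this
    linarith
  let v : (∀ t, S t → ℝ) → ℝ := fun x => ∫ s, Φ x s ∂μ
  have hbdd : BddBelow (v '' F) := ⟨-∫ s, r s ∂μ, by rintro _ ⟨x, hx, rfl⟩; exact hlow x hx⟩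
  let m := sInf (v '' F)
  have hm : ∀ x ∈ F, m ≤ v x := fun x hx => csInf_le hbdd ⟨x, hx, rfl⟩
  let V : ℕ → Set ((∀ t, S t) → ℝ) := fun n =>
    (fun x s => Φ x s + r s) '' {x | x ∈ F ∧ v x ≤ m + 1 / ((n : ℝ) + 1)}
  have hlint : ∀ x ∈ F, ∫⁻ s, ENNReal.ofReal (Φ x s + r s) ∂μ
      = ENNReal.ofReal (v x + ∫ s, r s ∂μ) := fun x hx => by
    have hi : Integrable (fun s => Φ x s + r s) μ := (hFi x hx).add hr
    rw [← ofReal_integral_eq_lintegral_ofReal hi (hnn x hx), integral_add (hFi x hx) hr]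
  obtain ⟨f, hfV, hf⟩ := exists_ae_convergent μ V
    (by
      intro n k h
      refine image_mono fun x hx => ⟨hx.1, hx.2.trans ?_⟩
      have : 1 / ((k : ℝ) + 1) ≤ 1 / ((n : ℝ) + 1) := Nat.one_div_le_one_div h
      linarith)
    (by
      intro n
      obtain ⟨_, ⟨x, hx, rfl⟩, h⟩ := exists_lt_of_csInf_lt (hne.image v)
        (show sInf (v '' F) < m + 1 / ((n : ℝ) + 1) from
          lt_add_of_pos_right _ Nat.one_div_pos_of_nat)
      exact ⟨_, x, ⟨hx, h.le⟩, rfl⟩)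
    (by
      rintro n _ ⟨x, ⟨hx, hxv⟩, rfl⟩ _ ⟨y, ⟨hy, hyv⟩, rfl⟩
      let z : ∀ t, S t → ℝ := fun t u => (x t u + y t u) / 2
      have hz : Φ z = fun s => (Φ x s + Φ y s) / 2 := by
        funext s
        simp only [Φ, z]
        rw [← Finset.sum_div, Finset.sum_add_distrib]
      have hzi : Integrable (Φ z) μ := by
        rw [hz]; exact ((hFi x hx).add (hFi y hy)).div_const 2
      refine ⟨z, ⟨?_, ?_⟩, ?_⟩
      · rw [hF]
        refine ⟨fun t => ((hFm x hx t).add (hFm y hy t)).div_const 2, ?_, hzi⟩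
        obtain ⟨A, hA, hAP⟩ := (hFp x hx).exists_ae μt
        obtain ⟨B, hB, hBP⟩ := (hFp y hy).exists_ae μt
        refine prodAE_of_ae μt (fun t => (hA t).and (hB t)) fun s hs => ?_
        have h1 := hAP s fun t => (hs t).1
        have h2 := hBP s fun t => (hs t).2
        change (-(Φ z s : ℝ) : EReal) ≤ c s
        rcases le_total (Φ x s) (Φ y s) with h | h
        · refine le_trans ?_ h1
          have : -(Φ z s) ≤ -(Φ x s) := by rw [hz]; simp only; linarith
          exact_mod_cast this
        · refine le_trans ?_ h2
          have : -(Φ z s) ≤ -(Φ y s) := by rw [hz]; simp only; linarith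
          exact_mod_cast this
      · have : v z = (v x + v y) / 2 := by
          simp only [v]
          rw [hz, integral_div, integral_add (hFi x hx) (hFi y hy)]
        change v z ≤ _
        rw [this]; linarith
      · funext s
        change Φ z s + r s = _
        rw [hz]; ring)
    (by rintro _ ⟨x, ⟨hx, -⟩, rfl⟩; exact (hΦm x hx).add hrm)
    (by rintro _ ⟨x, ⟨hx, -⟩, rfl⟩; exact hnn x hx)
    (M := ENNReal.ofReal (m + 1 + ∫ s, r s ∂μ)) ENNReal.ofReal_ne_top
    (by
      rintro _ ⟨x, ⟨hx, hxv⟩, rfl⟩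
      refine (hlint x hx).trans_le (ENNReal.ofReal_le_ofReal ?_)
      norm_num at hxv
      linarith)
  choose x hx hxf using hfV
  have hconv : ∀ᵐ s ∂μ, ∃ l : ℝ, Tendsto (fun n => Φ (x n) s) atTop (nhds l) := by
    filter_upwards [hf] with s ⟨l, hl⟩
    refine ⟨l - r s, (hl.sub_const (r s)).congr fun n => ?_⟩
    simp only [← hxf n]
    ring
  -- Anchoring at a generic point `s` turns convergence of the sums into convergence of each
  -- coordinate, after recentring.
  obtain ⟨s, ⟨k, hk⟩, hs⟩ := (hconv.and (ae_ae_update μt hconv)).exists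
  have hcoord : ∀ t, ∀ᵐ u ∂(μt t), ∃ l : ℝ,
      Tendsto (fun n => x n t u - x n t (s t)) atTop (nhds l) := fun t => by
    filter_upwards [hs t] with u ⟨l, hl⟩
    refine ⟨l - k, (hl.sub hk).congr fun n => ?_⟩
    simp only [Φ, sum_update_eq]
    ring
  choose w hwm hw using fun t => measurable_limit_of_tendsto_metrizable_ae
    (fun n => ((hFm _ (hx n).1 t).sub_const (x n t (s t))).aemeasurable) (hcoord t)
  -- The limit `k` of the sums at the anchor point is put back into the coordinate `0`.
  let y : ∀ t, S t → ℝ := fun t u => w t u + if t = 0 then k else 0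
  have hy : ∀ s', Φ y s' = ∑ t, w t (s' t) + k := fun s' => by
    simp [Φ, y, Finset.sum_add_distrib]
  have hlim : ∀ s', (∀ t, Tendsto (fun n => x n t (s' t) - x n t (s t)) atTop
      (nhds (w t (s' t)))) → Tendsto (fun n => Φ (x n) s') atTop (nhds (Φ y s')) := by
    intro s' h
    rw [hy]
    refine ((tendsto_finsetSum Finset.univ fun t _ => h t).add hk).congr fun n => ?_
    simp only [Φ, Finset.sum_sub_distrib]
    ring
  have hprod : ProdAE μt fun s' => (-(Φ y s' : ℝ) : EReal) ≤ c s' ∧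
      Tendsto (fun n => Φ (x n) s') atTop (nhds (Φ y s')) := by
    choose A hA hAP using fun n => (hFp _ (hx n).1).exists_ae μt
    refine prodAE_of_ae μt (fun t => (ae_all_iff.2 fun n => hA n t).and (hw t)) fun s' h => ?_
    have hl := hlim s' fun t => (h t).2
    refine ⟨?_, hl⟩
    have h1 : Tendsto (fun n => ((-(Φ (x n) s') : ℝ) : EReal)) atTop
        (nhds ((-(Φ y s') : ℝ) : EReal)) :=
      (continuous_coe_real_ereal.tendsto _).comp hl.neg
    have h2 := le_of_tendsto' h1 fun n => by
      have := hAP n s' fun t => (h t).1 n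
      exact_mod_cast this
    exact_mod_cast h2
  have hym : ∀ t, Measurable (y t) := fun t => (hwm t).add_const _
  have hyΦm : Measurable (Φ y) :=
    Finset.measurable_sum _ fun t _ => (hym t).comp (measurable_pi_apply t)
  have hae := hprod.ae μt (pi_map_coord μt)
  have hynn : ∀ᵐ s ∂μ, 0 ≤ Φ y s + r s := by
    filter_upwards [hae, hcr] with s h1 h2
    have h1 := h1.1
    rw [h2] at h1
    have : -(Φ y s) ≤ r s := by exact_mod_cast h1
    linarith
  have hvlim : Tendsto (fun n => v (x n)) atTop (nhds m) := by
    have h1 : Tendsto (fun n : ℕ => m + 1 / ((n : ℝ) + 1)) atTop (nhds m) := by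
      simpa using (tendsto_one_div_add_atTop_nhds_zero_nat (𝕜 := ℝ)).const_add m
    exact tendsto_of_tendsto_of_tendsto_of_le_of_le tendsto_const_nhds h1
      (fun n => hm _ (hx n).1) (fun n => (hx n).2)
  have hfatou : ∫⁻ s, ENNReal.ofReal (Φ y s + r s) ∂μ
      ≤ ENNReal.ofReal (m + ∫ s, r s ∂μ) := by
    have h1 : ∫⁻ s, ENNReal.ofReal (Φ y s + r s) ∂μ
        = ∫⁻ s, liminf (fun n => ENNReal.ofReal (Φ (x n) s + r s)) atTop ∂μ := by
      refine lintegral_congr_ae ?_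
      filter_upwards [hae] with s h
      exact ((ENNReal.continuous_ofReal.tendsto _).comp (h.2.add_const (r s))).liminf_eq.symm
    rw [h1]
    refine (lintegral_liminf_le' fun n =>
      ((hΦm _ (hx n).1).add hrm).ennreal_ofReal.aemeasurable).trans ?_
    have h2 : (fun n => ∫⁻ s, ENNReal.ofReal (Φ (x n) s + r s) ∂μ)
        = fun n => ENNReal.ofReal (v (x n) + ∫ s, r s ∂μ) :=
      funext fun n => hlint _ (hx n).1
    change liminf (fun n => ∫⁻ s, ENNReal.ofReal (Φ (x n) s + r s) ∂μ) atTop ≤ _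
    rw [h2]
    exact ((ENNReal.continuous_ofReal.tendsto _).comp
      (hvlim.add_const (∫ s, r s ∂μ))).liminf_eq.le
  have hyri : Integrable (fun s => Φ y s + r s) μ := by
    refine ⟨(hyΦm.add hrm).aestronglyMeasurable, ?_⟩
    rw [hasFiniteIntegral_iff_ofReal hynn]
    exact hfatou.trans_lt ENNReal.ofReal_lt_top
  have hyi : Integrable (Φ y) μ := by
    refine (hyri.sub hr).congr (Eventually.of_forall fun s => ?_)
    simp
  have hmr : 0 ≤ m + ∫ s, r s ∂μ := by
    have : -∫ s, r s ∂μ ≤ m := le_csInf (hne.image v) (by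
      rintro _ ⟨x, hx, rfl⟩; exact hlow x hx)
    linarith
  have hyv : v y ≤ m := by
    rw [← ofReal_integral_eq_lintegral_ofReal hyri hynn, integral_add hyi hr,
      ENNReal.ofReal_le_ofReal_iff hmr] at hfatou
    simp only [v]
    linarith
  refine ⟨y, ?_, fun x' hx' => hyv.trans (hm x' hx')⟩
  rw [hF]
  refine ⟨hym, ?_, hyi⟩
  obtain ⟨A, hA, hAP⟩ := hprod
  exact ⟨A, hA, fun s hs => (hAP s hs).1⟩

end Product

/-! ### The extended-real integral -/

theorem eInt_congr {X : Type*} [MeasurableSpace X] {m : Measure X} {f g : X → EReal}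
    (h : f =ᵐ[m] g) : eInt m f = eInt m g := by
  have h1 : ∫⁻ s, (f s).posPart' ∂m = ∫⁻ s, (g s).posPart' ∂m :=
    lintegral_congr_ae (by filter_upwards [h] with s hs; rw [hs])
  have h2 : ∫⁻ s, (-(f s)).posPart' ∂m = ∫⁻ s, (-(g s)).posPart' ∂m :=
    lintegral_congr_ae (by filter_upwards [h] with s hs; rw [hs])
  simp only [eInt, h1, h2]

theorem posPart'_coe (x : ℝ) : (x : EReal).posPart' = ENNReal.ofReal x := by
  simp [EReal.posPart']

theorem posPart'_eq_zero_iff {x : EReal} : x.posPart' = 0 ↔ x ≤ 0 :=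
  EReal.toENNReal_eq_zero_iff

theorem eInt_coe {X : Type*} [MeasurableSpace X] {m : Measure X} {f : X → ℝ}
    (hf : Integrable f m) : eInt m (fun s => (f s : EReal)) = ((∫ s, f s ∂m : ℝ) : EReal) := by
  have h1 : ∫⁻ s, ENNReal.ofReal (f s) ∂m ≠ ⊤ := hf.lintegral_lt_top.ne
  have h2 : ∫⁻ s, ENNReal.ofReal (-f s) ∂m ≠ ⊤ := hf.neg.lintegral_lt_top.ne
  simp only [eInt, ← EReal.coe_neg, posPart'_coe, if_neg h1]
  rw [integral_eq_lintegral_pos_part_sub_lintegral_neg_part hf, EReal.coe_sub,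
    EReal.coe_ennreal_toReal h1, EReal.coe_ennreal_toReal h2]

/-- `eInt` is additive for the sum of a nonnegative extended function and an integrable one,
including the case where the former has infinite integral. -/
theorem eInt_add_coe {X : Type*} [MeasurableSpace X] {m : Measure X} {C : X → ℝ≥0∞}
    (hC : Measurable C) {f : X → ℝ} (hf : Integrable f m) :
    eInt m (fun s => (C s : EReal) + (f s : EReal))
      = ((∫⁻ s, C s ∂m : ℝ≥0∞) : EReal) + ((∫ s, f s ∂m : ℝ) : EReal) := by
  by_cases h : ∫⁻ s, C s ∂m = ⊤
  · have hle : ∀ s, C s ≤ ((C s : EReal) + (f s : EReal)).posPart' + ‖f s‖ₑ := fun s => by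
      by_cases hs : C s = ⊤
      · simp [hs, EReal.posPart']
      · lift C s to NNReal using hs with x
        have : ((x : ℝ≥0∞) : EReal) + (f s : EReal) = (((x : ℝ) + f s : ℝ) : EReal) := by
          rw [EReal.coe_add]; rfl
        rw [this, posPart'_coe, ← ofReal_norm, ← ENNReal.ofReal_coe_nnreal]
        refine le_trans (ENNReal.ofReal_le_ofReal ?_) ENNReal.ofReal_add_le
        have := neg_abs_le (f s)
        rw [Real.norm_eq_abs]
        linarith
    have h1 : ∫⁻ s, ((C s : EReal) + (f s : EReal)).posPart' ∂m = ⊤ := by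
      have h2 := lintegral_mono (μ := m) hle
      rw [lintegral_add_right' _ hf.1.enorm, h, top_le_iff, ENNReal.add_eq_top] at h2
      exact h2.resolve_right hf.2.ne
    simp [eInt, h1, h]
  · have hg : Integrable (fun s => (C s).toReal) m := integrable_toReal_of_lintegral_ne_top hC.aemeasurable h
    have hlt := ae_lt_top hC h
    have : (fun s => (C s : EReal) + (f s : EReal)) =ᵐ[m]
        fun s => (((C s).toReal + f s : ℝ) : EReal) := by
      filter_upwards [hlt] with s hs
      rw [EReal.coe_add, EReal.coe_ennreal_toReal hs.ne]
    have hi : Integrable (fun s => (C s).toReal + f s) m := hg.add hf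
    rw [eInt_congr this, eInt_coe hi, integral_add hg hf, EReal.coe_add, integral_toReal hC.aemeasurable hlt,
      EReal.coe_ennreal_toReal h]

theorem eInt_nonneg {X : Type*} [MeasurableSpace X] {m : Measure X} {f : X → EReal}
    (h : ∀ᵐ s ∂m, 0 ≤ f s) : 0 ≤ eInt m f := by
  have h1 : ∫⁻ s, (-(f s)).posPart' ∂m = 0 := by
    rw [lintegral_congr_ae (g := fun _ => 0), lintegral_zero]
    filter_upwards [h] with s hs
    exact posPart'_eq_zero_iff.2 (by simpa using hs)
  simp only [eInt, h1]
  split_ifs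
  · exact le_top
  · simpa using EReal.coe_ennreal_nonneg _

theorem ae_eq_zero_of_eInt_eq_zero {X : Type*} [MeasurableSpace X] {m : Measure X} {f : X → EReal}
    (hf : Measurable f) (h : ∀ᵐ s ∂m, 0 ≤ f s) (h0 : eInt m f = 0) : ∀ᵐ s ∂m, f s = 0 := by
  have h1 : ∫⁻ s, (-(f s)).posPart' ∂m = 0 := by
    rw [lintegral_congr_ae (g := fun _ => 0), lintegral_zero]
    filter_upwards [h] with s hs
    exact posPart'_eq_zero_iff.2 (by simpa using hs)
  simp only [eInt, h1] at h0
  split_ifs at h0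
  · simp at h0
  have h2 : ∫⁻ s, (f s).posPart' ∂m = 0 := by simpa using h0
  have hm : Measurable fun s => (f s).posPart' := hf.ereal_toENNReal
  rw [lintegral_eq_zero_iff hm] at h2
  filter_upwards [h2, h] with s h3 h4
  exact le_antisymm (posPart'_eq_zero_iff.1 h3) h4

theorem lowerSemicontinuous_toENNReal_sub {X : Type*} [TopologicalSpace X] {c : X → EReal}
    (hc : LowerSemicontinuous c) {a : X → ℝ} (ha : Continuous a) :
    LowerSemicontinuous fun s => (c s - (a s : EReal)).toENNReal := by
  have h1 : LowerSemicontinuous fun s => c s + ((-a s : ℝ) : EReal) :=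
    hc.add' (continuous_coe_real_ereal.comp ha.neg).lowerSemicontinuous fun s =>
      EReal.continuousAt_add (by simp) (by simp)
  have h2 := EReal.continuous_toENNReal.comp_lowerSemicontinuous h1
    (fun _ _ h => EReal.toENNReal_le_toENNReal h)
  exact h2

theorem coe_toENNReal_sub_add {e : EReal} {a : ℝ} (h : (a : EReal) ≤ e) :
    ((e - a).toENNReal : EReal) + a = e := by
  rw [EReal.coe_toENNReal (EReal.sub_nonneg (by simp) (by simp) |>.2 h)]
  exact EReal.sub_add_cancel

/-! ### Integrability of dual feasible points -/

section Assembly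

variable {T : ℕ} {S : Fin (T + 1) → Type*} [∀ t, MeasurableSpace (S t)]
  (μt : ∀ t, Measure (S t))

theorem integrable_sum_of_eInt_ne_top {x : ∀ t, S t → ℝ} (hx : ∀ t, Measurable (x t))
    {r : (∀ t, S t) → ℝ} (hr : Integrable r (Measure.pi μt))
    (h : ∀ᵐ s ∂(Measure.pi μt), -(∑ t, x t (s t)) ≤ r s)
    (hfin : eInt (Measure.pi μt) (fun s => ((∑ t, x t (s t) : ℝ) : EReal)) ≠ ⊤) :
    Integrable (fun s => ∑ t, x t (s t)) (Measure.pi μt) := by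
  have hm : Measurable fun s : ∀ t, S t => ∑ t, x t (s t) :=
    Finset.measurable_sum _ fun t _ => (hx t).comp (measurable_pi_apply t)
  have h1 : ∫⁻ s, ENNReal.ofReal (∑ t, x t (s t)) ∂(Measure.pi μt) ≠ ⊤ := fun h1 =>
    hfin (by simp only [eInt, posPart'_coe, h1, if_true])
  have h2 : Integrable (fun s => max (∑ t, x t (s t)) 0) (Measure.pi μt) := by
    refine ⟨(hm.max measurable_const).aestronglyMeasurable, ?_⟩
    have hnn : 0 ≤ᵐ[Measure.pi μt] fun s : ∀ t, S t => max (∑ t, x t (s t)) 0 :=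
      Eventually.of_forall fun s => le_max_right _ _
    rw [hasFiniteIntegral_iff_ofReal hnn]
    simpa [ENNReal.ofReal_max] using h1.lt_top
  refine integrable_of_le_of_le hm.aestronglyMeasurable (g₁ := fun s => -r s) ?_
    (Eventually.of_forall fun s => le_max_left _ _) hr.neg h2
  filter_upwards [h] with s hs
  linarith

/-- If `Σ x_t` is bounded above by an integrable function along a coupling `m` and each `x_t` is
bounded below by an integrable function, then every `x_t` is integrable: the upper bound for
`x_t` follows from the lower bounds of the other summands. -/
theorem integrable_of_sum_le {m : Measure (∀ t, S t)} (hm : ∀ t, m.map (fun s => s t) = μt t)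
    {x f : ∀ t, S t → ℝ} (hx : ∀ t, Measurable (x t)) (hf : ∀ t, Integrable (f t) (μt t))
    (hxf : ∀ t, ∀ᵐ u ∂(μt t), -x t u ≤ f t u) {b : (∀ t, S t) → ℝ} (hb : Integrable b m)
    (hxb : ∀ᵐ s ∂m, ∑ t, x t (s t) ≤ b s) (t : Fin (T + 1)) : Integrable (x t) (μt t) := by
  have hfm : ∀ t, Integrable (fun s : ∀ t, S t => f t (s t)) m := fun t => by
    have h := hf t
    rw [← hm t] at h
    exact h.comp_measurable (measurable_pi_apply t)
  have hlow : ∀ᵐ s ∂m, ∀ t, -x t (s t) ≤ f t (s t) := ae_all_iff.2 fun t =>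
    ae_of_ae_map (p := fun u => -x t u ≤ f t u) (measurable_pi_apply t).aemeasurable
      (by rw [hm t]; exact hxf t)
  have hup : Integrable (fun s => b s + (∑ r, f r (s r) - f t (s t))) m :=
    hb.add ((integrable_finsetSum _ fun r _ => hfm r).sub (hfm t))
  have h1 : Integrable (fun s : ∀ t, S t => x t (s t)) m := by
    refine integrable_of_le_of_le ((hx t).comp (measurable_pi_apply t)).aestronglyMeasurable
      (g₁ := fun s => -f t (s t)) ?_ ?_ (hfm t).neg hup
    · filter_upwards [hlow] with s hs
      have := hs t
      linarith
    · filter_upwards [hlow, hxb] with s hs hs'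
      have h3 := Finset.sum_le_sum fun r (_ : r ∈ Finset.univ.erase t) => hs r
      rw [Finset.sum_neg_distrib] at h3
      have h4 := Finset.add_sum_erase Finset.univ (fun r => x r (s r)) (Finset.mem_univ t)
      have h5 := Finset.add_sum_erase Finset.univ (fun r => f r (s r)) (Finset.mem_univ t)
      linarith
  rw [← hm t, integrable_map_measure (hx t).aestronglyMeasurable
    (measurable_pi_apply t).aemeasurable]
  exact h1

end Assembly

/-! ### Monge–Kantorovich duality -/

/-- **Theorem (Monge–Kantorovich duality).**
Let `S_t`, `t = 0,…,T`, be Polish spaces, `ψ_t : S_t → [1,∞)` continuous and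
`μ_t`-integrable, `ψ(s) = ∑_t ψ_t(s_t)`, `μ_t` Borel probability measures and
`μ = ∏_t μ_t`.  Let `c : S → ℝ ∪ {+∞}` be lower semicontinuous and `μ`-integrable with
`c ≥ Kψ` for some `K ∈ ℝ`.  Then the Monge–Kantorovich problem (minimize `∫ c dλ` over
nonnegative `λ ∈ M` with marginals `λ_t = μ_t`) and its dual relaxation (minimize
`∫ ∑_t x_t dμ` over measurable `x_t` with `−∑ x_t ≤ c` on a product of full-measure
sets) are both attained, there is no duality gap, feasible `λ` and `x` are optimal iff
`∫ (c + ∑_t x_t) dλ = 0`, and every feasible `x` in the relaxed problem has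
`x_t ∈ L¹(μ_t)`, the relaxed objective being `∑_t ∫ x_t dμ_t`. -/
theorem stmt16
    {T : ℕ} (S : Fin (T + 1) → Type*)
    [∀ t, TopologicalSpace (S t)] [∀ t, PolishSpace (S t)]
    [∀ t, MeasurableSpace (S t)] [∀ t, BorelSpace (S t)]
    (ψt : ∀ t, S t → ℝ) (hψc : ∀ t, Continuous (ψt t)) (hψ1 : ∀ t st, 1 ≤ ψt t st)
    (μt : ∀ t, Measure (S t)) [∀ t, IsProbabilityMeasure (μt t)]
    (hψint : ∀ t, Integrable (ψt t) (μt t))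
    (μ : Measure (∀ t, S t)) (hμ : μ = Measure.pi μt)
    (c : (∀ t, S t) → EReal)
    (hclsc : LowerSemicontinuous c)
    (K : ℝ) (hcK : ∀ s, ((K * ∑ t, ψt t (s t) : ℝ) : EReal) ≤ c s)
    (hcint : eInt μ c ≠ ⊤)
    -- the transport problem (the "dual" problem (D) = (mk)):
    (FeasD : Set (Measure (∀ t, S t)))
    (hFeasD : FeasD = {lam | Integrable (fun s => ∑ t, ψt t (s t)) lam ∧
        ∀ t, lam.map (fun s => s t) = μt t})
    (objD : Measure (∀ t, S t) → EReal) (hobjD : objD = fun lam => eInt lam c)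
    -- the relaxed primal problem (mkpr):
    (Φ : Set (∀ t, S t → ℝ))
    (hΦ : Φ = {x | (∀ t, Measurable (x t)) ∧
        ProdAE μt fun s => (-(∑ t, x t (s t) : ℝ) : EReal) ≤ c s})
    (objP : (∀ t, S t → ℝ) → EReal)
    (hobjP : objP = fun x => eInt μ fun s => ((∑ t, x t (s t) : ℝ) : EReal)) :
    -- attainment in the transport problem
    (∃ lam ∈ FeasD, objD lam = ⨅ lam' ∈ FeasD, objD lam') ∧
    -- attainment in the relaxed dual problem
    (∃ x ∈ Φ, objP x = ⨅ x' ∈ Φ, objP x') ∧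
    -- no duality gap
    (⨅ x ∈ Φ, objP x) = -(⨅ lam ∈ FeasD, objD lam) ∧
    -- optimality conditions
    (∀ lam ∈ FeasD, ∀ x ∈ Φ,
      ((objD lam = ⨅ lam' ∈ FeasD, objD lam' ∧ objP x = ⨅ x' ∈ Φ, objP x') ↔
        eInt lam (fun s => c s + ((∑ t, x t (s t) : ℝ) : EReal)) = 0)) ∧
    -- integrability of feasible relaxed solutions and the form of the objective
    (∀ x ∈ Φ, objP x ≠ ⊤ →
      (∀ t, Integrable (x t) (μt t)) ∧
      objP x = ((∑ t, ∫ st, x t st ∂(μt t) : ℝ) : EReal)) := by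
  subst hμ hFeasD hobjD hΦ hobjP
  let a : (∀ t, S t) → ℝ := fun s => K * ∑ t, ψt t (s t)
  let Ψ : ℝ := K * ∑ t, ∫ u, ψt t u ∂(μt t)
  let C : (∀ t, S t) → ℝ≥0∞ := fun s => (c s - (a s : EReal)).toENNReal
  have hac : Continuous a := continuous_const.mul
    (continuous_finsetSum _ fun t _ => (hψc t).comp (continuous_apply t))
  have hcC : ∀ s, c s = (C s : EReal) + (a s : EReal) := fun s =>
    (coe_toENNReal_sub_add (hcK s)).symm
  have hClsc : LowerSemicontinuous C := lowerSemicontinuous_toENNReal_sub hclsc hac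
  have hCm : Measurable C := hClsc.measurable
  have hcm : Measurable c := hclsc.measurable
  -- Marginal constraints alone determine the integral of `Kψ`.
  have ha : ∀ lam : Measure (∀ t, S t), (∀ t, lam.map (fun s => s t) = μt t) →
      Integrable a lam ∧ ∫ s, a s ∂lam = Ψ := fun lam h => by
    obtain ⟨h1, h2⟩ := integral_sum_eval μt h hψint
    exact ⟨h1.const_mul K, by simp only [a, Ψ]; rw [integral_const_mul, h2]⟩
  -- Hence the transport cost is, up to the constant `Ψ`, the integral of `C = c - Kψ ≥ 0`.
  have hobj : ∀ lam : Measure (∀ t, S t), (∀ t, lam.map (fun s => s t) = μt t) →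
      eInt lam c = ((∫⁻ s, C s ∂lam : ℝ≥0∞) : EReal) + (Ψ : EReal) := fun lam h => by
    rw [funext hcC, eInt_add_coe hCm (ha lam h).1, (ha lam h).2]
  have hpi := pi_map_coord μt
  have hCfin : ∫⁻ s, C s ∂(Measure.pi μt) ≠ ⊤ := fun h => hcint (by
    rw [hobj _ hpi, h]; simp)
  -- A real-valued version of `c` for the product measure.
  let r : (∀ t, S t) → ℝ := fun s => (C s).toReal + a s
  have hrm : Measurable r := hCm.ennreal_toReal.add hac.measurable
  have hr : Integrable r (Measure.pi μt) :=
    (integrable_toReal_of_lintegral_ne_top hCm.aemeasurable hCfin).add (ha _ hpi).1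
  have hcr : ∀ᵐ s ∂(Measure.pi μt), c s = r s := by
    filter_upwards [ae_lt_top hCm hCfin] with s hs
    rw [hcC, EReal.coe_add, EReal.coe_ennreal_toReal hs.ne]
  have hle : ∀ x : ∀ t, S t → ℝ,
      ProdAE μt (fun s => (-(∑ t, x t (s t) : ℝ) : EReal) ≤ c s) →
      ∀ᵐ s ∂(Measure.pi μt), -(∑ t, x t (s t)) ≤ r s := fun x hx => by
    filter_upwards [hx.ae μt hpi, hcr] with s h1 h2
    rw [h2] at h1
    exact_mod_cast h1
  -- The objective of the dual problem at a point with integrable coordinates.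
  have hobjP : ∀ x : ∀ t, S t → ℝ, (∀ t, Integrable (x t) (μt t)) →
      eInt (Measure.pi μt) (fun s => ((∑ t, x t (s t) : ℝ) : EReal))
        = ((∑ t, ∫ u, x t u ∂(μt t) : ℝ) : EReal) := fun x hx => by
    obtain ⟨h1, h2⟩ := integral_sum_eval μt hpi hx
    rw [eInt_coe h1, h2]
  -- The duality gap of a pair with integrable `x_t` is the integral of the slack `c + Σ x_t`.
  have hgap : ∀ lam : Measure (∀ t, S t), (∀ t, lam.map (fun s => s t) = μt t) →
      ∀ x : ∀ t, S t → ℝ, (∀ t, Integrable (x t) (μt t)) →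
      eInt lam (fun s => c s + ((∑ t, x t (s t) : ℝ) : EReal))
        = eInt lam c + ((∑ t, ∫ u, x t u ∂(μt t) : ℝ) : EReal) := fun lam h x hx => by
    obtain ⟨h1, h2⟩ := integral_sum_eval μt h hx
    have h3 : (fun s => c s + ((∑ t, x t (s t) : ℝ) : EReal))
        = fun s => (C s : EReal) + ((a s + ∑ t, x t (s t) : ℝ) : EReal) := by
      funext s
      rw [hcC, add_assoc, EReal.coe_add]
    have h4 : Integrable (fun s => a s + ∑ t, x t (s t)) lam := (ha lam h).1.add h1
    rw [h3, eInt_add_coe hCm h4, integral_add (ha lam h).1 h1, (ha lam h).2, h2, hobj lam h,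
      EReal.coe_add, add_assoc]
  have hnn : ∀ lam : Measure (∀ t, S t), (∀ t, lam.map (fun s => s t) = μt t) →
      ∀ x : ∀ t, S t → ℝ, ProdAE μt (fun s => (-(∑ t, x t (s t) : ℝ) : EReal) ≤ c s) →
      ∀ᵐ s ∂lam, 0 ≤ c s + ((∑ t, x t (s t) : ℝ) : EReal) := fun lam h x hx => by
    filter_upwards [hx.ae μt h] with s hs
    have := add_le_add_left hs ((∑ t, x t (s t) : ℝ) : EReal)
    refine le_trans (le_of_eq ?_) this
    rw [← EReal.coe_neg, ← EReal.coe_add, neg_add_cancel, EReal.coe_zero]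
  -- Dual feasible points with integrable sum; the other feasible points have objective `⊤`.
  let F : Set (∀ t, S t → ℝ) := {x | (∀ t, Measurable (x t)) ∧
    ProdAE μt (fun s => (-(∑ t, x t (s t) : ℝ) : EReal) ≤ c s) ∧
    Integrable (fun s => ∑ t, x t (s t)) (Measure.pi μt)}
  have hFint : ∀ x ∈ F, ∀ t, Integrable (x t) (μt t) := fun x hx =>
    integrable_of_integrable_sum μt hx.2.2
  have hΦF : ∀ x : ∀ t, S t → ℝ, ((∀ t, Measurable (x t)) ∧
      ProdAE μt (fun s => (-(∑ t, x t (s t) : ℝ) : EReal) ≤ c s)) →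
      eInt (Measure.pi μt) (fun s => ((∑ t, x t (s t) : ℝ) : EReal)) ≠ ⊤ → x ∈ F :=
    fun x hx hfin => ⟨hx.1, hx.2, integrable_sum_of_eInt_ne_top μt hx.1 hr (hle x hx.2) hfin⟩
  -- Potentials below `C` give dual feasible points.
  have hφF : ∀ φ : ∀ t, S t → ℝ, (∀ t, Continuous (φ t)) → (∀ t, Integrable (φ t) (μt t)) →
      (∀ s, ENNReal.ofReal (∑ t, φ t (s t)) ≤ C s) →
      (fun t u => -φ t u - K * ψt t u) ∈ F := fun φ hφc hφi hφC => by
    have hs : ∀ s : ∀ t, S t, ∑ t, (-φ t (s t) - K * ψt t (s t))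
        = -(∑ t, φ t (s t)) - a s := fun s => by
      simp only [a, Finset.sum_sub_distrib, Finset.sum_neg_distrib, Finset.mul_sum]
    refine ⟨fun t => ((hφc t).neg.sub (continuous_const.mul (hψc t))).measurable, ?_, ?_⟩
    · refine prodAE_of_ae μt (A := fun _ _ => True) (fun t => by simp) fun s _ => ?_
      have h1 : ((∑ t, φ t (s t) : ℝ) : EReal) ≤ (C s : EReal) := by
        refine le_trans ?_ (EReal.coe_ennreal_le_coe_ennreal_iff.2 (hφC s))
        rw [EReal.coe_ennreal_ofReal]
        exact EReal.coe_le_coe_iff.2 (le_max_left _ _)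
      rw [hs, hcC, ← EReal.coe_neg, show -(-(∑ t, φ t (s t)) - a s) = ∑ t, φ t (s t) + a s by ring,
        EReal.coe_add]
      exact add_le_add_left h1 _
    · exact (integral_sum_eval μt hpi fun t => (hφi t).neg.sub ((hψint t).const_mul K)).1
  obtain ⟨x₀, hx₀F, hx₀⟩ := exists_dual_minimizer μt c r hrm hr hcr F rfl
    ⟨_, hφF (fun _ _ => 0) (fun _ => continuous_const) (fun _ => integrable_const _) (by simp)⟩
  let m₀ : ℝ := ∑ t, ∫ u, x₀ t u ∂(μt t)
  have hm₀ : ∀ x ∈ F, m₀ ≤ ∑ t, ∫ u, x t u ∂(μt t) := fun x hx => by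
    have := hx₀ x hx
    rwa [(integral_sum_eval μt hpi (hFint _ hx₀F)).2,
      (integral_sum_eval μt hpi (hFint _ hx)).2] at this
  have hx₀P := hobjP x₀ (hFint _ hx₀F)
  have hDφ : ∀ φ : ∀ t, S t → ℝ, (∀ t, Continuous (φ t)) → (∀ t, Integrable (φ t) (μt t)) →
      (∀ s, ENNReal.ofReal (∑ t, φ t (s t)) ≤ C s) →
      ∑ t, ∫ u, φ t u ∂(μt t) ≤ -m₀ - Ψ := fun φ hφc hφi hφC => by
    have h1 := hm₀ _ (hφF φ hφc hφi hφC)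
    have h2 : ∀ t, ∫ u, (-φ t u - K * ψt t u) ∂(μt t)
        = -(∫ u, φ t u ∂(μt t)) - K * ∫ u, ψt t u ∂(μt t) := fun t => by
      have hi : Integrable (fun u => -φ t u) (μt t) := (hφi t).neg
      rw [integral_sub hi ((hψint t).const_mul K), integral_neg, integral_const_mul]
    simp only [h2, Finset.sum_sub_distrib, Finset.sum_neg_distrib, ← Finset.mul_sum] at h1
    simp only [Ψ]
    linarith
  obtain ⟨lam₀, hlam₀, hC₀⟩ := exists_coupling_of_dual_bound μt hClsc (-m₀ - Ψ) hDφ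
  have hD0 : 0 ≤ -m₀ - Ψ := by
    simpa using hDφ (fun _ _ => 0) (fun _ => continuous_const) (fun _ => integrable_const _)
      (by simp)
  have hweak : ∀ lam : Measure (∀ t, S t), (∀ t, lam.map (fun s => s t) = μt t) →
      ((-m₀ : ℝ) : EReal) ≤ eInt lam c := fun lam h => by
    have h1 := eInt_nonneg (hnn lam h x₀ hx₀F.2.1)
    rw [hgap lam h x₀ (hFint _ hx₀F)] at h1
    have h2 := add_le_add_left h1 ((-m₀ : ℝ) : EReal)
    rwa [zero_add, add_assoc, ← EReal.coe_add, add_neg_cancel, EReal.coe_zero, add_zero] at h2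
  have hlam₀c : eInt lam₀ c = ((-m₀ : ℝ) : EReal) := by
    refine le_antisymm ?_ (hweak _ hlam₀)
    rw [hobj _ hlam₀]
    refine (add_le_add_left (EReal.coe_ennreal_le_coe_ennreal_iff.2 hC₀) _).trans ?_
    rw [EReal.coe_ennreal_ofReal, max_eq_left hD0, ← EReal.coe_add, sub_add_cancel]
  let FeasD : Set (Measure (∀ t, S t)) := {lam | Integrable (fun s => ∑ t, ψt t (s t)) lam ∧
        ∀ t, lam.map (fun s => s t) = μt t}
  let Φ : Set (∀ t, S t → ℝ) := {x | (∀ t, Measurable (x t)) ∧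
        ProdAE μt fun s => (-(∑ t, x t (s t) : ℝ) : EReal) ≤ c s}
  have hlam₀F : lam₀ ∈ FeasD := ⟨(integral_sum_eval μt hlam₀ hψint).1, hlam₀⟩
  have hx₀Φ : x₀ ∈ Φ := ⟨hx₀F.1, hx₀F.2.1⟩
  have hinfD : ⨅ lam ∈ FeasD, eInt lam c = ((-m₀ : ℝ) : EReal) :=
    le_antisymm ((iInf₂_le lam₀ hlam₀F).trans hlam₀c.le) (le_iInf₂ fun lam h => hweak lam h.2)
  have hinfP : ⨅ x ∈ Φ, eInt (Measure.pi μt) (fun s => ((∑ t, x t (s t) : ℝ) : EReal))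
      = (m₀ : EReal) := by
    refine le_antisymm ((iInf₂_le x₀ hx₀Φ).trans hx₀P.le) (le_iInf₂ fun x hx => ?_)
    by_cases hfin : eInt (Measure.pi μt) (fun s => ((∑ t, x t (s t) : ℝ) : EReal)) = ⊤
    · rw [hfin]; exact le_top
    · have hxF := hΦF x hx hfin
      rw [hobjP x (hFint x hxF)]
      exact EReal.coe_le_coe_iff.2 (hm₀ x hxF)
  refine ⟨⟨lam₀, hlam₀F, hlam₀c.trans hinfD.symm⟩, ⟨x₀, hx₀Φ, hx₀P.trans hinfP.symm⟩, ?_, ?_, ?_⟩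
  · change ⨅ x ∈ Φ, eInt (Measure.pi μt) (fun s => ((∑ t, x t (s t) : ℝ) : EReal))
      = -⨅ lam ∈ FeasD, eInt lam c
    rw [hinfD, hinfP, EReal.coe_neg, neg_neg]
  · intro lam hlam x hx
    change (eInt lam c = ⨅ lam ∈ FeasD, eInt lam c ∧
      eInt (Measure.pi μt) (fun s => ((∑ t, x t (s t) : ℝ) : EReal))
        = ⨅ x ∈ Φ, eInt (Measure.pi μt) (fun s => ((∑ t, x t (s t) : ℝ) : EReal))) ↔ _
    rw [hinfD, hinfP]
    constructor
    · rintro ⟨h1, h2⟩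
      have hxF := hΦF x hx (by rw [h2]; exact EReal.coe_ne_top _)
      rw [hgap lam hlam.2 x (hFint x hxF), ← hobjP x (hFint x hxF), h1, h2, ← EReal.coe_add,
        neg_add_cancel, EReal.coe_zero]
    · intro h0
      have hxm : Measurable fun s : ∀ t, S t => ∑ t, x t (s t) :=
        Finset.measurable_sum _ fun t _ => (hx.1 t).comp (measurable_pi_apply t)
      have hzero := ae_eq_zero_of_eInt_eq_zero (hcm.add hxm.coe_real_ereal)
        (hnn lam hlam.2 x hx.2) h0
      have hxb : ∀ᵐ s ∂lam, ∑ t, x t (s t) ≤ -a s := by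
        filter_upwards [hzero] with s hs
        rw [Pi.add_apply] at hs
        have h1 := add_le_add_left (hcK s) ((∑ t, x t (s t) : ℝ) : EReal)
        rw [hs, ← EReal.coe_add, ← EReal.coe_zero, EReal.coe_le_coe_iff] at h1
        simp only [a]
        linarith
      -- `Σ x_t ≤ -Kψ` holds `lam`-almost everywhere, and each `x_t` has an integrable lower bound
      -- under its marginal, so the `x_t` are integrable and the gap formula applies.
      choose f hf hxf using exists_integrable_neg_le μt hr (hle x hx.2)
      have hxi := integrable_of_sum_le μt hlam.2 hx.1 hf hxf (ha lam hlam.2).1.neg hxb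
      have hxF : x ∈ F := ⟨hx.1, hx.2, (integral_sum_eval μt hpi hxi).1⟩
      have h1 := hm₀ x hxF
      have h2 := hweak lam hlam.2
      rw [hgap lam hlam.2 x hxi] at h0
      rw [hobjP x hxi]
      generalize ∑ t, ∫ u, x t u ∂(μt t) = p at h0 h1
      have h3 : eInt lam c = ((-p : ℝ) : EReal) := by
        have := congrArg (· + ((-p : ℝ) : EReal)) h0
        simpa only [add_assoc, ← EReal.coe_add, add_neg_cancel, EReal.coe_zero, add_zero,
          zero_add] using this
      rw [h3, EReal.coe_le_coe_iff] at h2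
      have h4 : p = m₀ := by linarith
      rw [h3, h4]
      exact ⟨rfl, rfl⟩
  · intro x hx hfin
    have hxF := hΦF x hx hfin
    exact ⟨hFint x hxF, hobjP x (hFint x hxF)⟩

end
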